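/- arXiv:1906.10668 — 4 statements merged into one kernel-verified Lean document; each statement's English description precedes it below -/
import Mathlib

section
/- Let p be a prime, q = p^r a power of p, and n ≥ 1 an integer with n^4 ≤ 4q (equivalently n^2 ≤ 2√q). Then there exists an integer t such that t^2 ≤ 4q, p does not divide t, and n^2 divides q + 1 − t. -/
/-! Put `m = n ^ 2`, so `m ^ 2 ≤ 4 q`. With `t₀` the residue of `q + 1` modulo `m` in `[0, m)`, both
`t₀` and `t₀ - m` lie in `[-m, m]` and are congruent to `q + 1` modulo `m`. If `p` divided both, it
would divide `m`, hence `q + 1 - t₀`, hence `q + 1`; this is impossible as `p ∣ q`. -/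

/-- If `n ^ 4 ≤ 4 q` with `q = p ^ r`, there is an integer `t` with `t ^ 2 ≤ 4 q`, `p ∤ t`, and
`n ^ 2 ∣ q + 1 - t`. -/
theorem exists_admissible_trace
    (p r q : ℕ) (hp : p.Prime) (hr : 0 < r) (hq : q = p ^ r)
    (n : ℕ) (hn : 1 ≤ n) (h : n ^ 4 ≤ 4 * q) :
    ∃ t : ℤ, t ^ 2 ≤ 4 * q ∧ ¬ (p : ℤ) ∣ t ∧ (n : ℤ) ^ 2 ∣ (q + 1 - t) := by
  have hpq : (p : ℤ) ∣ q := by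
    rw [hq]
    exact_mod_cast dvd_pow_self p hr.ne'
  have hm : ((n : ℤ) ^ 2) ^ 2 ≤ 4 * q := by
    rw [← pow_mul]
    exact_mod_cast h
  have hm0 : (0 : ℤ) < (n : ℤ) ^ 2 := by positivity
  generalize (n : ℤ) ^ 2 = m at hm hm0 ⊢
  have h0 := Int.emod_nonneg ((q : ℤ) + 1) hm0.ne'
  have h1 := Int.emod_lt_of_pos ((q : ℤ) + 1) hm0
  have hd : m ∣ (q : ℤ) + 1 - ((q : ℤ) + 1) % m := Int.dvd_self_sub_emod
  generalize ((q : ℤ) + 1) % m = t at h0 h1 hd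
  by_cases hpt : (p : ℤ) ∣ t
  · refine ⟨t - m, by nlinarith, fun hpt' => ?_, ?_⟩
    · have hpm : (p : ℤ) ∣ m := by simpa using dvd_sub hpt hpt'
      have hp1 : (p : ℤ) ∣ 1 := by
        have := dvd_sub (dvd_add (hpm.trans hd) hpt) hpq
        simpa using this
      exact hp.one_lt.ne' (by exact_mod_cast Int.eq_one_of_dvd_one (by positivity) hp1)
    · have := dvd_add hd (dvd_refl m)
      rwa [← sub_add]
  · exact ⟨t, by nlinarith, hpt, hd⟩
end

section
/- Let k be a field of characteristic p, let q = p^e with e ≥ 1, let n ≥ 2, and let V_n be the k-subspace of k[x_0,…,x_{n−1}] spanned by the monomials x_i^q·x_j for 0 ≤ i, j ≤ n−1. Suppose f ∈ V_n is nonzero and there exist three linear forms ℓ₁, ℓ₂, ℓ₃, pairwise non-proportional, each of which divides f. Then there exist two linearly independent linear forms u, v and a nonzero scalar c ∈ k such that f = c·(u^q·v − v^q·u). -/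
/-!
Write `q = p ^ e`. Since `x ↦ x ^ q` is additive in characteristic `p`, for any basis `(b s)` of
the space of linear forms an element of `V_n` is a combination of the products `b s ^ q * b t`
(`exists_expansion`). If `b s₀` divides `f`, setting this coordinate to zero shows that only the
terms with `s = s₀` or `t = s₀` occur (`coeff_eq_zero_of_dvd`). Extending independent divisors to
a basis therefore gives two facts: three independent linear divisors force `f = 0`
(`eq_zero_of_three`), and two independent divisors `u`, `v` force
`f = α • (u ^ q * v) + β • (v ^ q * u)` (`eq_of_two`).

Hence `ℓ 2` is a combination of `ℓ 0` and `ℓ 1`, with both coefficients nonzero by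
non-proportionality. Rescaling, `ℓ 2 = u + v` with `u`, `v` multiples of `ℓ 0`, `ℓ 1`; evaluating
at a point where `u = 1` and `v = -1` gives `β = -α` (`eq_of_sum_dvd`).
-/

open MvPolynomial

/-- The linear form `∑ i, w i • X i` attached to a coefficient vector `w`. -/
noncomputable def linForm (k : Type) [Field k] (n : ℕ) :
    (Fin n → k) →ₗ[k] MvPolynomial (Fin n) k :=
  Fintype.linearCombination k (fun i => (X i : MvPolynomial (Fin n) k))

section

variable {k : Type} [Field k] {n : ℕ}

lemma linForm_single (i : Fin n) : linForm k n (Pi.single i 1) = X i := by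
  simp [linForm, Fintype.linearCombination_apply_single]

lemma linForm_homogeneous (w : Fin n → k) : (linForm k n w).IsHomogeneous 1 := by
  rw [← mem_homogeneousSubmodule, homogeneousSubmodule_one_eq_span_X,
    ← Fintype.range_linearCombination]
  exact ⟨w, rfl⟩

lemma exists_linForm {l : MvPolynomial (Fin n) k} (h : l.IsHomogeneous 1) :
    ∃ w, linForm k n w = l := by
  rw [← mem_homogeneousSubmodule, homogeneousSubmodule_one_eq_span_X,
    ← Fintype.range_linearCombination] at h
  exact h

/-- A linear substitution: every `k`-linear map from coefficient vectors to a `k`-algebra is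
induced by an algebra homomorphism on polynomials. -/
lemma exists_subst {A : Type} [CommRing A] [Algebra k A] (g : (Fin n → k) →ₗ[k] A) :
    ∃ φ : MvPolynomial (Fin n) k →ₐ[k] A, ∀ w, φ (linForm k n w) = g w := by
  refine ⟨aeval fun i => g (Pi.single i 1), fun w => ?_⟩
  have h : (aeval fun i => g (Pi.single i 1) : MvPolynomial (Fin n) k →ₐ[k] A).toLinearMap ∘ₗ
      linForm k n = g := by
    refine (Pi.basisFun k (Fin n)).ext fun i => ?_
    simp [linForm_single]
  exact LinearMap.congr_fun h w

lemma linForm_injective : Function.Injective (linForm k n) := by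
  rw [injective_iff_map_eq_zero]
  intro w hw
  funext j
  obtain ⟨φ, hφ⟩ := exists_subst (LinearMap.proj j : (Fin n → k) →ₗ[k] k)
  have := hφ w
  rw [hw, map_zero] at this
  exact this.symm

lemma exists_basis_extending {m : ℕ} {v : Fin m → Fin n → k} (hv : LinearIndependent k v) :
    ∃ (S : Set (Fin n → k)) (b : Module.Basis S k (Fin n → k)),
      (∀ s, b s = s) ∧ ∀ i, v i ∈ S := by
  refine ⟨_, Module.Basis.extend hv.linearIndepOn_id, fun s => ?_, fun i => ?_⟩
  · exact Module.Basis.extend_apply_self _ s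
  · exact hv.linearIndepOn_id.subset_extend _ ⟨i, rfl⟩

/-- `V_n` does not depend on the choice of coordinates, because `x ↦ x ^ p ^ e` is additive. -/
lemma exists_expansion (p e : ℕ) [Fact p.Prime] [CharP k p] {S : Type} [Fintype S]
    (b : Module.Basis S k (Fin n → k)) {f : MvPolynomial (Fin n) k}
    (hf : f ∈ Submodule.span k
      {g : MvPolynomial (Fin n) k | ∃ i j : Fin n, g = X i ^ p ^ e * X j}) :
    ∃ a : S → S → k,
      f = ∑ s, ∑ t, a s t • (linForm k n (b s) ^ p ^ e * linForm k n (b t)) := by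
  induction hf using Submodule.span_induction with
  | mem g hg =>
    obtain ⟨i, j, rfl⟩ := hg
    have hX (i : Fin n) : (X i : MvPolynomial (Fin n) k) =
        ∑ s, b.repr (Pi.single i 1) s • linForm k n (b s) := by
      conv_lhs => rw [← linForm_single, ← b.sum_repr (Pi.single i 1), map_sum]
      simp
    refine ⟨fun s t => b.repr (Pi.single i 1) s ^ p ^ e * b.repr (Pi.single j 1) t, ?_⟩
    conv_lhs => rw [hX i, hX j, sum_pow_char_pow, Finset.sum_mul_sum]
    simp only [smul_pow, smul_mul_smul_comm]
  | zero => exact ⟨0, by simp⟩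
  | add g h _ _ hg hh =>
    obtain ⟨a, rfl⟩ := hg
    obtain ⟨a', rfl⟩ := hh
    exact ⟨a + a', by simp [add_smul, Finset.sum_add_distrib]⟩
  | smul c g _ hg =>
    obtain ⟨a, rfl⟩ := hg
    exact ⟨c • a, by simp [Finset.smul_sum, mul_smul]⟩

/-- For `q ≥ 2` the monomials `X s ^ q * X t` are pairwise distinct, so a vanishing combination
of them is trivial. -/
lemma coeff_eq_zero_of_sum {S : Type} [Fintype S] [DecidableEq S] {q : ℕ} (hq : 2 ≤ q)
    {a : S → S → k}
    (h : ∑ s, ∑ t, a s t • ((X s : MvPolynomial S k) ^ q * X t) = 0) (s t : S) :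
    a s t = 0 := by
  have key (s' t' : S) :
      coeff (Finsupp.single s q + Finsupp.single t 1) ((X s' : MvPolynomial S k) ^ q * X t') =
        if s' = s ∧ t' = t then 1 else 0 := by
    rw [X_pow_eq_monomial, X, monomial_mul, coeff_monomial]
    congr 1
    · rw [eq_iff_iff]
      constructor
      · intro H
        have hs : s' = s := by
          by_contra hne
          have := DFunLike.congr_fun H s
          simp only [Finsupp.add_apply, Finsupp.single_apply, if_neg hne] at this
          split_ifs at this <;> omega
        subst hs
        exact ⟨rfl, Finsupp.single_left_injective one_ne_zero (add_left_cancel H)⟩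
      · rintro ⟨rfl, rfl⟩; rfl
    · simp
  have := congrArg (coeff (Finsupp.single s q + Finsupp.single t 1)) h
  simp only [coeff_sum, coeff_smul, key, coeff_zero, smul_eq_mul, mul_ite, mul_one, mul_zero,
    ite_and] at this
  simpa using this

/-- Setting the coordinate `b s₀` to zero kills `f`, hence every coefficient avoiding `s₀`. -/
lemma coeff_eq_zero_of_dvd {S : Type} [Fintype S] {q : ℕ} (hq : 2 ≤ q)
    (b : Module.Basis S k (Fin n → k)) {a : S → S → k} {s₀ : S}
    (h : linForm k n (b s₀) ∣
      ∑ s, ∑ t, a s t • (linForm k n (b s) ^ q * linForm k n (b t)))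
    {s t : S} (hs : s ≠ s₀) (ht : t ≠ s₀) : a s t = 0 := by
  classical
  obtain ⟨φ, hφ⟩ := exists_subst
    (b.constr k fun s => if s = s₀ then 0 else (X s : MvPolynomial S k))
  have hφb (s : S) : φ (linForm k n (b s)) = if s = s₀ then 0 else X s := by
    rw [hφ, Module.Basis.constr_basis]
  have h0 := map_dvd φ h
  rw [hφb, if_pos rfl, zero_dvd_iff] at h0
  have h1 : ∑ s, ∑ t, (if s = s₀ ∨ t = s₀ then 0 else a s t) •
      ((X s : MvPolynomial S k) ^ q * X t) = 0 := by
    rw [← h0]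
    simp only [map_sum, map_smul, map_mul, map_pow, hφb]
    refine Finset.sum_congr rfl fun s _ => Finset.sum_congr rfl fun t _ => ?_
    by_cases hs : s = s₀ <;> by_cases ht : t = s₀ <;>
      simp [hs, ht, show q ≠ 0 by omega]
  simpa [hs, ht] using coeff_eq_zero_of_sum hq h1 s t

/-- An element of `V_n` divisible by independent linear forms `v i` only involves terms
`s ^ q * t` in which every `v i` occurs. -/
lemma exists_reduced_expansion (p e : ℕ) [Fact p.Prime] [CharP k p] (he : 1 ≤ e) {m : ℕ}
    {v : Fin m → Fin n → k} (hv : LinearIndependent k v) {f : MvPolynomial (Fin n) k}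
    (hf : f ∈ Submodule.span k
      {g : MvPolynomial (Fin n) k | ∃ i j : Fin n, g = X i ^ p ^ e * X j})
    (hd : ∀ i, linForm k n (v i) ∣ f) :
    ∃ (S : Set (Fin n → k)) (_ : Fintype S) (a : S → S → k),
      f = ∑ s, ∑ t, a s t • (linForm k n s ^ p ^ e * linForm k n t) ∧ (∀ i, v i ∈ S) ∧
      ∀ s t, a s t ≠ 0 → ∀ i, (s : Fin n → k) = v i ∨ (t : Fin n → k) = v i := by
  obtain ⟨S, b, hb, hS⟩ := exists_basis_extending hv
  let _ : Fintype S := FiniteDimensional.fintypeBasisIndex b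
  obtain ⟨a, ha⟩ := exists_expansion p e b hf
  have hq : 2 ≤ p ^ e :=
    (Fact.out : p.Prime).two_le.trans (Nat.le_self_pow (by omega) p)
  refine ⟨S, inferInstance, a, by simpa only [hb] using ha, hS, fun s t hst i => ?_⟩
  by_contra! hne
  refine hst (coeff_eq_zero_of_dvd hq b (s₀ := ⟨v i, hS i⟩) ?_ ?_ ?_)
  · rw [← ha, hb]; exact hd i
  · exact fun h => hne.1 (congrArg Subtype.val h)
  · exact fun h => hne.2 (congrArg Subtype.val h)

lemma eq_zero_of_three (p e : ℕ) [Fact p.Prime] [CharP k p] (he : 1 ≤ e)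
    {v : Fin 3 → Fin n → k} (hv : LinearIndependent k v) {f : MvPolynomial (Fin n) k}
    (hf : f ∈ Submodule.span k
      {g : MvPolynomial (Fin n) k | ∃ i j : Fin n, g = X i ^ p ^ e * X j})
    (hd : ∀ i, linForm k n (v i) ∣ f) : f = 0 := by
  obtain ⟨S, _, a, ha, -, h⟩ := exists_reduced_expansion p e he hv hf hd
  rw [ha]
  refine Finset.sum_eq_zero fun s _ => Finset.sum_eq_zero fun t _ => ?_
  by_cases h0 : a s t = 0
  · simp [h0]
  have h01 := hv.injective.ne (show (0 : Fin 3) ≠ 1 by decide)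
  have h02 := hv.injective.ne (show (0 : Fin 3) ≠ 2 by decide)
  have h12 := hv.injective.ne (show (1 : Fin 3) ≠ 2 by decide)
  have := h s t h0 0
  have := h s t h0 1
  have := h s t h0 2
  grind

lemma eq_of_two (p e : ℕ) [Fact p.Prime] [CharP k p] (he : 1 ≤ e)
    {u v : Fin n → k} (hv : LinearIndependent k ![u, v]) {f : MvPolynomial (Fin n) k}
    (hf : f ∈ Submodule.span k
      {g : MvPolynomial (Fin n) k | ∃ i j : Fin n, g = X i ^ p ^ e * X j})
    (hdu : linForm k n u ∣ f) (hdv : linForm k n v ∣ f) :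
    ∃ α β : k, f = α • (linForm k n u ^ p ^ e * linForm k n v) +
      β • (linForm k n v ^ p ^ e * linForm k n u) := by
  classical
  obtain ⟨S, _, a, ha, hS, h⟩ := exists_reduced_expansion p e he hv hf
    (by intro i; fin_cases i <;> assumption)
  have huv : u ≠ v := hv.injective.ne (show (0 : Fin 2) ≠ 1 by decide)
  have hu : u ∈ S := hS 0
  have hvS : v ∈ S := hS 1
  refine ⟨a ⟨u, hu⟩ ⟨v, hvS⟩, a ⟨v, hvS⟩ ⟨u, hu⟩, ?_⟩
  rw [ha, ← Fintype.sum_prod_type', Finset.sum_eq_add_of_mem (⟨u, hu⟩, ⟨v, hvS⟩)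
    (⟨v, hvS⟩, ⟨u, hu⟩) (Finset.mem_univ _) (Finset.mem_univ _)]
  · simp [huv]
  · rintro ⟨s, t⟩ - ⟨h1, h2⟩
    by_cases h0 : a s t = 0
    · simp [h0]
    have hu' : (s : Fin n → k) = u ∨ (t : Fin n → k) = u := h s t h0 0
    have hv' : (s : Fin n → k) = v ∨ (t : Fin n → k) = v := h s t h0 1
    simp only [ne_eq, Prod.mk.injEq, Subtype.ext_iff] at h1 h2
    grind

/-- If also `u + v` divides `f`, the two coefficients are opposite: evaluate at a point with
`u = 1` and `v = -1`. -/
lemma eq_of_sum_dvd (p e : ℕ) [Fact p.Prime] [CharP k p] (he : 1 ≤ e)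
    {u v : Fin n → k} (hv : LinearIndependent k ![u, v]) {f : MvPolynomial (Fin n) k}
    (hf : f ∈ Submodule.span k
      {g : MvPolynomial (Fin n) k | ∃ i j : Fin n, g = X i ^ p ^ e * X j})
    (hdu : linForm k n u ∣ f) (hdv : linForm k n v ∣ f) (hds : linForm k n (u + v) ∣ f) :
    ∃ c : k, f = c • (linForm k n u ^ p ^ e * linForm k n v -
      linForm k n v ^ p ^ e * linForm k n u) := by
  classical
  obtain ⟨α, β, rfl⟩ := eq_of_two p e he hv hf hdu hdv
  obtain ⟨S, b, hb, hS⟩ := exists_basis_extending hv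
  have huv : u ≠ v := hv.injective.ne (show (0 : Fin 2) ≠ 1 by decide)
  obtain ⟨φ, hφ⟩ := exists_subst
    (b.constr k fun s => if (s : Fin n → k) = u then (1 : k) else -1)
  have hφb (s : S) : φ (linForm k n s) = if (s : Fin n → k) = u then 1 else -1 := by
    rw [hφ, ← hb s, Module.Basis.constr_basis, hb s]
  have hφu : φ (linForm k n u) = 1 := by simpa using hφb ⟨u, hS 0⟩
  have hφv : φ (linForm k n v) = -1 := by simpa [huv.symm] using hφb ⟨v, hS 1⟩
  have h0 := map_dvd φ hds
  have hneg : (-1 : k) ^ p ^ e = -1 := by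
    have := map_neg (iterateFrobenius k p e) 1
    rwa [map_one, iterateFrobenius_def] at this
  rw [map_add, map_add, hφu, hφv, add_neg_cancel, zero_dvd_iff] at h0
  simp only [map_add, map_smul, map_mul, map_pow, hφu, hφv, hneg, one_pow, smul_eq_mul] at h0
  obtain rfl : β = -α := by linear_combination -h0
  exact ⟨α, by rw [smul_sub, neg_smul, sub_eq_add_neg]⟩

end

/-- A nonzero polynomial in `V_n = span {x_i^q x_j}` divisible by three pairwise non-proportional
linear forms is, up to a nonzero scalar, of the form `u^q v - v^q u` with `u, v` linearly
independent linear forms. -/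
theorem three_linear_factors_implies_orbit_form
    (p : ℕ) (hp : p.Prime) (e : ℕ) (he : 1 ≤ e) (q : ℕ) (hq : q = p ^ e)
    (k : Type) [Field k] [CharP k p] (n : ℕ) (hn : 2 ≤ n)
    (f : MvPolynomial (Fin n) k)
    (hf : f ∈ Submodule.span k
      {g : MvPolynomial (Fin n) k | ∃ i j : Fin n, g = X i ^ q * X j})
    (hf0 : f ≠ 0)
    (ℓ : Fin 3 → MvPolynomial (Fin n) k)
    (hhom : ∀ i, (ℓ i).IsHomogeneous 1) (hne : ∀ i, ℓ i ≠ 0)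
    (hprop : ∀ i j, i ≠ j → ∀ c : k, ℓ i ≠ c • ℓ j)
    (hdvd : ∀ i, ℓ i ∣ f) :
    ∃ (u v : MvPolynomial (Fin n) k) (c : k),
      u.IsHomogeneous 1 ∧ v.IsHomogeneous 1 ∧ LinearIndependent k ![u, v] ∧ c ≠ 0 ∧
        f = c • (u ^ q * v - v ^ q * u) := by
  subst hq
  have : Fact p.Prime := ⟨hp⟩
  choose w hw using fun i => exists_linForm (hhom i)
  have hw0 (i) : w i ≠ 0 := fun h => hne i (by rw [← hw, h, map_zero])
  have hwp (i j) (hij : i ≠ j) (c : k) : w i ≠ c • w j := fun h =>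
    hprop i j hij c (by rw [← hw, ← hw, h, map_smul])
  simp only [← hw] at hdvd
  have h01 : LinearIndependent k ![w 0, w 1] :=
    (LinearIndependent.pair_iff' (hw0 0)).2 fun c h => hwp 1 0 (by decide) c h.symm
  -- `ℓ 2` is a combination of `ℓ 0` and `ℓ 1`, as three independent divisors force `f = 0`.
  have hmem : w 2 ∈ Submodule.span k (Set.range ![w 0, w 1]) := by
    by_contra hmem
    refine hf0 (eq_zero_of_three p e he (linearIndependent_finSnoc.2 ⟨h01, hmem⟩) hf ?_)
    intro i
    fin_cases i
    · exact hdvd 0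
    · exact hdvd 1
    · exact hdvd 2
  rw [Matrix.range_cons_cons_empty, Submodule.mem_span_pair] at hmem
  obtain ⟨α, β, h2⟩ := hmem
  have hα : α ≠ 0 := by
    rintro rfl
    exact hwp 2 1 (by decide) β (by rw [← h2, zero_smul, zero_add])
  have hβ : β ≠ 0 := by
    rintro rfl
    exact hwp 2 0 (by decide) α (by rw [← h2, zero_smul, add_zero])
  have hind : LinearIndependent k ![α • w 0, β • w 1] := by
    refine (LinearIndependent.pair_iff' (smul_ne_zero hα (hw0 0))).2 fun c h => ?_
    refine hwp 1 0 (by decide) (β⁻¹ * (c * α)) ?_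
    rw [mul_smul, mul_smul, h, inv_smul_smul₀ hβ]
  have hscale {c : k} (hc : c ≠ 0) {x : Fin n → k} (h : linForm k n x ∣ f) :
      linForm k n (c • x) ∣ f := by
    rw [map_smul]
    refine dvd_trans ⟨C c⁻¹, ?_⟩ h
    rw [mul_comm, ← smul_eq_C_mul, inv_smul_smul₀ hc]
  obtain ⟨c, hc⟩ := eq_of_sum_dvd p e he hind hf (hscale hα (hdvd 0)) (hscale hβ (hdvd 1))
    (h2 ▸ hdvd 2)
  refine ⟨_, _, c, linForm_homogeneous _, linForm_homogeneous _, ?_, ?_, hc⟩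
  · have := hind.map' (linForm k n) (LinearMap.ker_eq_bot.2 linForm_injective)
    have hcomp : ⇑(linForm k n) ∘ ![α • w 0, β • w 1] =
        ![linForm k n (α • w 0), linForm k n (β • w 1)] := by
      funext i
      fin_cases i <;> rfl
    rw [hcomp] at this
    exact this
  · rintro rfl
    exact hf0 (by rw [hc, zero_smul])
end

section
/- Let k be a field of characteristic p, let q = p^e with e ≥ 1, let n ≥ 2, and let V_n be the k-subspace of k[x_0,…,x_{n−1}] spanned by the monomials x_i^q·x_j for 0 ≤ i, j ≤ n−1. Suppose f ∈ V_n is nonzero and ℓ is a linear form such that ℓ^2 divides f. Then there exists a linear form u such that f = ℓ^q·u; in particular f lies in the orbit under linear changes of variables of x_0^q·x_1 (if u is not proportional to ℓ) or of x_0^{q+1} (if u is proportional to ℓ). -/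
/-!
Write `f = ∑ j, g_j x_j` with each `g_j` a linear combination of the `x_i ^ q`. Since `q = 0` in
`k`, the partial derivative of `f` along `x_j` is `g_j`, so `ℓ ^ 2 ∣ f` forces `ℓ ∣ g_j` for
every `j`. A combination of the `x_i ^ q` divisible by `ℓ` is a scalar multiple `c_j ℓ ^ q`
(`eq_C_mul_pow_of_dvd`): if `ℓ = ∑ b_i x_i` with `b_m ≠ 0`, its vanishing at the zeros
`b_m e_i - b_i e_m` of `ℓ` determines all its coefficients from the `m`-th one.
Hence `f = ℓ ^ q * ∑ c_j x_j`.
-/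

open MvPolynomial

/-- A linear combination of the `q`-th powers of the variables that is divisible by a linear form
`ℓ` is a scalar multiple of `ℓ ^ q`. No root extraction is involved, so `k` need not be perfect. -/
lemma eq_C_mul_pow_of_dvd {p : ℕ} (hp : p.Prime) (e : ℕ) {k : Type} [Field k] [CharP k p] {n : ℕ}
    {ℓ : MvPolynomial (Fin n) k} (hhom : ℓ.IsHomogeneous 1) (hℓ0 : ℓ ≠ 0) (a : Fin n → k)
    (hdvd : ℓ ∣ ∑ i, C (a i) * X i ^ p ^ e) :
    ∃ c : k, ∑ i, C (a i) * X i ^ p ^ e = C c * ℓ ^ p ^ e := by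
  have : Fact p.Prime := ⟨hp⟩
  have hq0 : (0 : k) ^ p ^ e = 0 := zero_pow (pow_ne_zero _ hp.ne_zero)
  obtain ⟨b, hb⟩ : ∃ b : Fin n → k, ℓ = ∑ i, C (b i) * X i := by
    have h : ℓ ∈ homogeneousSubmodule (Fin n) k 1 := hhom
    rw [homogeneousSubmodule_one_eq_span_X, Submodule.mem_span_range_iff_exists_fun] at h
    obtain ⟨b, hb⟩ := h
    exact ⟨b, by simp [← hb, smul_eq_C_mul]⟩
  obtain ⟨m, hm⟩ : ∃ m, b m ≠ 0 := by
    by_contra! h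
    exact hℓ0 (by simp [hb, h])
  have key : ∀ i, a i * b m ^ p ^ e = a m * b i ^ p ^ e := by
    intro i
    -- the point `b_m e_i - b_i e_m` is a zero of `ℓ`
    obtain ⟨h, hh⟩ := hdvd
    have hev := congrArg (eval (Pi.single i (b m) - Pi.single m (b i) : Fin n → k)) hh
    have hz : eval (Pi.single i (b m) - Pi.single m (b i) : Fin n → k) ℓ = 0 := by
      simp [hb, mul_sub, Finset.sum_sub_distrib, Pi.single_apply, mul_comm]
    rw [map_mul, hz, zero_mul] at hev
    simp [sub_pow_char_pow, mul_sub, Finset.sum_sub_distrib, Pi.single_apply, ite_pow, hq0] at hev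
    exact sub_eq_zero.mp hev
  refine ⟨a m / b m ^ p ^ e, ?_⟩
  rw [hb, sum_pow_char_pow, Finset.mul_sum]
  refine Finset.sum_congr rfl fun i _ => ?_
  rw [mul_pow, ← C_pow, ← mul_assoc, ← C_mul]
  congr 2
  field_simp
  exact key i

/-- A nonzero polynomial in `V_n = span {x_i^q x_j}` divisible by the square of a linear form `ℓ`
is of the form `ℓ^q u` for some linear form `u`. -/
theorem double_linear_factor_implies_exceptional_form
    (p : ℕ) (hp : p.Prime) (e : ℕ) (he : 1 ≤ e) (q : ℕ) (hq : q = p ^ e)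
    (k : Type) [Field k] [CharP k p] (n : ℕ) (hn : 2 ≤ n)
    (f : MvPolynomial (Fin n) k)
    (hf : f ∈ Submodule.span k
      {g : MvPolynomial (Fin n) k | ∃ i j : Fin n, g = X i ^ q * X j})
    (hf0 : f ≠ 0)
    (ℓ : MvPolynomial (Fin n) k) (hhom : ℓ.IsHomogeneous 1) (hℓ0 : ℓ ≠ 0)
    (hdvd : ℓ ^ 2 ∣ f) :
    ∃ u : MvPolynomial (Fin n) k, u.IsHomogeneous 1 ∧ u ≠ 0 ∧ f = ℓ ^ q * u := by
  subst hq
  have hqk : ((p ^ e : ℕ) : MvPolynomial (Fin n) k) = 0 := by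
    rw [Nat.cast_pow, CharP.cast_eq_zero, zero_pow (by omega)]
  obtain ⟨a, ha⟩ : ∃ a : Fin n → Fin n → k,
      f = ∑ j, (∑ i, C (a j i) * X i ^ p ^ e) * X j := by
    have hset : {g : MvPolynomial (Fin n) k | ∃ i j : Fin n, g = X i ^ p ^ e * X j} =
        Set.range fun t : Fin n × Fin n => X t.2 ^ p ^ e * X t.1 := by
      ext g
      constructor
      · rintro ⟨i, j, rfl⟩
        exact ⟨(j, i), rfl⟩
      · rintro ⟨⟨j, i⟩, rfl⟩
        exact ⟨i, j, rfl⟩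
    rw [hset, Submodule.mem_span_range_iff_exists_fun] at hf
    obtain ⟨c, hc⟩ := hf
    refine ⟨fun j i => c (j, i), ?_⟩
    simp only [← hc, Fintype.sum_prod_type, Finset.sum_mul, smul_eq_C_mul, mul_assoc]
  have hder : ∀ j, pderiv j f = ∑ i, C (a j i) * X i ^ p ^ e := by
    intro j
    have h0 : ∀ i, pderiv j (X i ^ p ^ e : MvPolynomial (Fin n) k) = 0 := fun i => by
      rw [pderiv_pow, hqk, zero_mul, zero_mul]
    simp [ha, Derivation.leibniz, h0, pderiv_X, Pi.single_apply]
  have hdiv : ∀ j, ℓ ∣ ∑ i, C (a j i) * X i ^ p ^ e := by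
    intro j
    obtain ⟨h, rfl⟩ := hdvd
    rw [← hder, sq, mul_assoc, pderiv_mul, pderiv_mul]
    exact dvd_add ((dvd_mul_right ℓ h).mul_left _) (dvd_mul_right _ _)
  choose c hc using fun j => eq_C_mul_pow_of_dvd hp e hhom hℓ0 (a j) (hdiv j)
  have hfu : f = ℓ ^ p ^ e * ∑ j, C (c j) * X j := by
    rw [ha, Finset.mul_sum]
    refine Finset.sum_congr rfl fun j _ => ?_
    rw [hc]
    ring
  refine ⟨∑ j, C (c j) * X j, ?_, ?_, hfu⟩
  · exact IsHomogeneous.sum _ _ _ fun j _ => (isHomogeneous_X k j).C_mul (c j)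
  · intro h
    exact hf0 (by rw [hfu, h, mul_zero])
end

section
/- Let k be a field of characteristic p, let q = p^e with e ≥ 1, let n ≥ 3, and let V_n be the k-subspace of k[x_0,…,x_{n−1}] spanned by the monomials x_i^q·x_j for 0 ≤ i, j ≤ n−1. If f ∈ V_n is divisible by each of three linearly independent linear forms ℓ₁, ℓ₂, ℓ₃, then f = 0. -/
open MvPolynomial

/-!
The space `V_n` is stable under linear changes of coordinates, because `q` is a power of the
characteristic and hence `(∑ cᵢ xᵢ)^q = ∑ cᵢ^q xᵢ^q`. Extending the three linear forms to a basis
of the space of linear forms and taking this basis as new coordinates, the forms become three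
distinct variables (`exists_coordinates`). A polynomial divisible by three distinct variables only
involves monomials containing all three of them, whereas a monomial `x_i^q x_j` contains at most
two variables; hence the polynomial vanishes.
-/

/-- Linearly independent linear forms are part of a coordinate system: some injective algebra map
`φ` sends linear forms to linear forms and the given forms to distinct variables. The new variables
are indexed by a basis of the space of linear forms. -/
lemma exists_coordinates {k : Type} [Field k] {n : ℕ} {ι : Type}
    (ℓ : ι → MvPolynomial (Fin n) k) (hhom : ∀ i, (ℓ i).IsHomogeneous 1)
    (hli : LinearIndependent k ℓ) :
    ∃ (τ : Type) (φ : MvPolynomial (Fin n) k →ₐ[k] MvPolynomial τ k) (m : ι → τ),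
      Function.Injective φ ∧ Function.Injective m ∧ (∀ i, φ (ℓ i) = X (m i)) ∧
      ∀ j, ∃ c : τ →₀ k, φ (X j) = ∑ t ∈ c.support, C (c t) * X t := by
  let W := homogeneousSubmodule (Fin n) k 1
  let ℓ' : ι → W := fun i => ⟨ℓ i, hhom i⟩
  have hli' : LinearIndependent k ℓ' := LinearIndependent.of_comp W.subtype hli
  let b := Module.Basis.extend hli'.linearIndepOn_id
  let m : ι → hli'.linearIndepOn_id.extend (Set.subset_univ _) := fun i =>
    ⟨ℓ' i, Module.Basis.subset_extend hli'.linearIndepOn_id ⟨i, rfl⟩⟩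
  have hbm : ∀ i, b (m i) = ℓ' i := fun i => Module.Basis.extend_apply_self _ _
  let T : W →ₗ[k] MvPolynomial (hli'.linearIndepOn_id.extend (Set.subset_univ _)) k :=
    b.constr k X
  let x : Fin n → W := fun j => ⟨X j, isHomogeneous_X k j⟩
  let φ : MvPolynomial (Fin n) k →ₐ[k] _ := aeval (fun j => T (x j))
  let ψ : MvPolynomial (hli'.linearIndepOn_id.extend (Set.subset_univ _)) k →ₐ[k]
    MvPolynomial (Fin n) k := aeval (fun t => (b t : MvPolynomial (Fin n) k))
  have hψT : ψ.toLinearMap ∘ₗ T = W.subtype := by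
    refine b.ext fun t => ?_
    simp [T, ψ, Module.Basis.constr_basis]
  have hψφ : ψ.comp φ = AlgHom.id k _ := by
    refine MvPolynomial.algHom_ext fun j => ?_
    have := LinearMap.congr_fun hψT (x j)
    simpa [φ, x] using this
  have hφT : ∀ w, ∀ hw : w ∈ W, φ w = T ⟨w, hw⟩ := by
    intro w hw
    have hw' : w ∈ Submodule.span k (Set.range (X : Fin n → MvPolynomial (Fin n) k)) := by
      rw [← homogeneousSubmodule_one_eq_span_X]; exact hw
    obtain ⟨c, rfl⟩ := (Submodule.mem_span_range_iff_exists_fun k).1 hw'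
    have : (⟨_, hw⟩ : W) = ∑ j, c j • x j := by
      ext1; simp [x]
    rw [this]
    simp [φ]
  refine ⟨_, φ, m, ?_, ?_, ?_, ?_⟩
  · exact Function.LeftInverse.injective (g := ψ) fun g => AlgHom.congr_fun hψφ g
  · intro i j h
    exact hli'.injective (congrArg Subtype.val h)
  · intro i
    rw [hφT _ (hhom i)]
    change T (ℓ' i) = _
    rw [← hbm i]
    exact b.constr_basis k _ _
  · intro j
    refine ⟨b.repr (x j), ?_⟩
    simp [φ, T, Module.Basis.constr_apply, Finsupp.sum, MvPolynomial.smul_eq_C_mul]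

lemma ne_zero_of_X_dvd {k τ : Type} [Field k] {g : MvPolynomial τ k} {t : τ} (h : X t ∣ g)
    {d : τ →₀ ℕ} (hd : coeff d g ≠ 0) : d t ≠ 0 := by
  classical
  obtain ⟨h, rfl⟩ := h
  rw [coeff_X_mul'] at hd
  intro h0
  simp [h0] at hd

lemma coeff_X_pow_mul_X_eq_zero {k τ : Type} [Field k] (q : ℕ) (s t : τ) {m : Fin 3 → τ}
    (hm : Function.Injective m) {d : τ →₀ ℕ} (hd : ∀ i, d (m i) ≠ 0) :
    coeff d (X s ^ q * X t : MvPolynomial τ k) = 0 := by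
  classical
  rw [X_pow_eq_monomial, X, monomial_mul, coeff_monomial, if_neg]
  rintro rfl
  have h : ∀ i, m i = s ∨ m i = t := by
    intro i
    by_contra! hc
    exact hd i (by simp [hc.1.symm, hc.2.symm])
  have h01 := hm.ne (show (0 : Fin 3) ≠ 1 by decide)
  have h02 := hm.ne (show (0 : Fin 3) ≠ 2 by decide)
  have h12 := hm.ne (show (1 : Fin 3) ≠ 2 by decide)
  grind

/-- A polynomial in `V_n = span {x_i^q x_j}` divisible by three linearly independent linear forms
is zero. -/
theorem three_independent_linear_factors_implies_zero
    (p : ℕ) (hp : p.Prime) (e : ℕ) (he : 1 ≤ e) (q : ℕ) (hq : q = p ^ e)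
    (k : Type) [Field k] [CharP k p] (n : ℕ) (hn : 3 ≤ n)
    (f : MvPolynomial (Fin n) k)
    (hf : f ∈ Submodule.span k
      {g : MvPolynomial (Fin n) k | ∃ i j : Fin n, g = X i ^ q * X j})
    (ℓ : Fin 3 → MvPolynomial (Fin n) k)
    (hhom : ∀ i, (ℓ i).IsHomogeneous 1)
    (hli : LinearIndependent k ℓ)
    (hdvd : ∀ i, ℓ i ∣ f) :
    f = 0 := by
  obtain ⟨τ, φ, m, hφ, hm, hφm, hφX⟩ := exists_coordinates ℓ hhom hli
  haveI : Fact p.Prime := ⟨hp⟩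
  refine hφ ?_
  rw [map_zero]
  ext d
  rw [coeff_zero]
  by_contra hne
  have hd : ∀ i, d (m i) ≠ 0 := fun i =>
    ne_zero_of_X_dvd (hφm i ▸ map_dvd φ (hdvd i)) hne
  refine hne ?_
  clear hne hdvd
  induction hf using Submodule.span_induction with
  | zero => simp
  | add a b _ _ ha hb => rw [map_add, coeff_add, ha, hb, add_zero]
  | smul c a _ ha => rw [map_smul, coeff_smul, ha, smul_zero]
  | mem g hg =>
    obtain ⟨i, j, rfl⟩ := hg
    obtain ⟨a, ha⟩ := hφX i
    obtain ⟨c, hc⟩ := hφX j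
    rw [map_mul, map_pow, ha, hc, hq, sum_pow_char_pow, Finset.sum_mul_sum, coeff_sum]
    refine Finset.sum_eq_zero fun s _ => ?_
    rw [coeff_sum]
    refine Finset.sum_eq_zero fun t _ => ?_
    rw [mul_pow, mul_mul_mul_comm, ← C_pow, ← C_mul, coeff_C_mul,
      coeff_X_pow_mul_X_eq_zero _ s t hm hd, mul_zero]
end
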